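/- For all w1, w2 ∈ H^0 one has Z̄(w1 ш̄ w2) = Z̄(w1) · Z̄(w2); that is, the n-evaluation map Z̄ is multiplicative with respect to the n-shuffle product. -/

import Mathlib

open scoped BigOperators

/-- The two-letter alphabet {x, y}. -/
inductive Letter : Type
  | x : Letter
  | y : Letter
deriving DecidableEq

/-- `H = ℚ⟨x,y⟩`, the noncommutative polynomial ring over ℚ in two
indeterminates, realized as the monoid algebra of the free monoid on `{x,y}`. -/
abbrev H : Type := MonoidAlgebra ℚ (FreeMonoid Letter)

namespace H

/-- The monomial (word) of `H` corresponding to an element of the free monoid. -/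
noncomputable def word (w : FreeMonoid Letter) : H := MonoidAlgebra.single w 1

/-- The generator `x`. -/
noncomputable def X : H := word (FreeMonoid.of Letter.x)

/-- The generator `y`. -/
noncomputable def Y : H := word (FreeMonoid.of Letter.y)

/-- The word `z_k = x^{k-1} y` (for `k ≥ 1`). -/
def zW (k : ℕ) : FreeMonoid Letter :=
  FreeMonoid.ofList (List.replicate (k - 1) Letter.x ++ [Letter.y])

/-- `z_k = x^{k-1} y` as an element of `H`. -/
noncomputable def z (k : ℕ) : H := word (zW k)

/-- A list `[k₁,…,kₙ]` gives the word `z_{k₁} z_{k₂} ⋯ z_{kₙ}`. -/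
def zListW (ks : List ℕ) : FreeMonoid Letter :=
  FreeMonoid.ofList (ks.flatMap fun k => List.replicate (k - 1) Letter.x ++ [Letter.y])

/-- `H¹ = ℚ + Hy` as a ℚ-submodule of `H`. -/
noncomputable def H1 : Submodule ℚ H :=
  LinearMap.range (LinearMap.mulRight ℚ Y) ⊔ Submodule.span ℚ {1}

/-- `H⁰ = ℚ + xHy` as a ℚ-submodule of `H`. -/
noncomputable def H0 : Submodule ℚ H :=
  LinearMap.range ((LinearMap.mulRight ℚ Y).comp (LinearMap.mulLeft ℚ X)) ⊔
    Submodule.span ℚ {1}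

/-- Parse a word of `H¹` into the exponent list of its `z`-decomposition:
`z_{k₁}⋯z_{kₙ} ↦ [k₁,…,kₙ]` (auxiliary accumulator version). -/
def toZAux : List Letter → ℕ → List ℕ
  | [], _ => []
  | Letter.x :: r, n => toZAux r (n + 1)
  | Letter.y :: r, n => (n + 1) :: toZAux r 0

/-- The `z`-decomposition of a word of `H¹`. -/
def toZ (w : FreeMonoid Letter) : List ℕ := toZAux (FreeMonoid.toList w) 0

/-- The harmonic product on words of `H¹` (via `z`-decompositions):
`1 * w = w * 1 = w` and
`z_k w₁ * z_l w₂ = z_k (w₁ * z_l w₂) + z_l (z_k w₁ * w₂) + z_{k+l} (w₁ * w₂)`. -/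
noncomputable def harmW : List ℕ → List ℕ → H
  | [], w => word (zListW w)
  | k :: w1, [] => word (zListW (k :: w1))
  | k :: w1, l :: w2 =>
      z k * harmW w1 (l :: w2) + z l * harmW (k :: w1) w2 + z (k + l) * harmW w1 w2
termination_by w1 w2 => w1.length + w2.length
decreasing_by all_goals simp [Nat.lt_succ_iff] <;> omega

/-- The n-harmonic product on words of `H¹`:
`1 *̄ w = w *̄ 1 = w` and
`z_k w₁ *̄ z_l w₂ = z_k (w₁ *̄ z_l w₂) + z_l (z_k w₁ *̄ w₂) − z_{k+l} (w₁ *̄ w₂)`. -/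
noncomputable def nharmW : List ℕ → List ℕ → H
  | [], w => word (zListW w)
  | k :: w1, [] => word (zListW (k :: w1))
  | k :: w1, l :: w2 =>
      z k * nharmW w1 (l :: w2) + z l * nharmW (k :: w1) w2 - z (k + l) * nharmW w1 w2
termination_by w1 w2 => w1.length + w2.length
decreasing_by all_goals simp [Nat.lt_succ_iff] <;> omega

/-- The harmonic product `*` on `H¹`, extended ℚ-bilinearly. -/
noncomputable def harm (a b : H) : H :=
  Finsupp.sum a.coeff fun w1 c1 =>
    Finsupp.sum b.coeff fun w2 c2 => (c1 * c2) • harmW (toZ w1) (toZ w2)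

/-- The n-harmonic product `*̄` on `H¹`, extended ℚ-bilinearly. -/
noncomputable def nharm (a b : H) : H :=
  Finsupp.sum a.coeff fun w1 c1 =>
    Finsupp.sum b.coeff fun w2 c2 => (c1 * c2) • nharmW (toZ w1) (toZ w2)

/-- The letter exchange `τ(x) = y`, `τ(y) = x`. -/
def τ : Letter → Letter
  | Letter.x => Letter.y
  | Letter.y => Letter.x

/-- `δ(w) = 1` if `w` is the empty word, `0` otherwise. -/
def δ : List Letter → ℚ
  | [] => 1
  | _ :: _ => 0

/-- The shuffle product on words:
`1 ш w = w ш 1 = w` and `u₁w₁ ш u₂w₂ = u₁(w₁ ш u₂w₂) + u₂(u₁w₁ ш w₂)`. -/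
noncomputable def shW : List Letter → List Letter → H
  | [], w => word (FreeMonoid.ofList w)
  | u :: w, [] => word (FreeMonoid.ofList (u :: w))
  | u1 :: w1, u2 :: w2 =>
      word (FreeMonoid.of u1) * shW w1 (u2 :: w2) +
        word (FreeMonoid.of u2) * shW (u1 :: w1) w2
termination_by w1 w2 => w1.length + w2.length
decreasing_by all_goals simp [Nat.lt_succ_iff]

/-- The n-shuffle product on words: `1 ш̄ w = w ш̄ 1 = w` and
`u₁w₁ ш̄ u₂w₂ = u₁(w₁ ш̄ u₂w₂) + u₂(u₁w₁ ш̄ w₂) − δ(w₁)τ(u₁)u₂w₂ − δ(w₂)τ(u₂)u₁w₁`. -/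
noncomputable def nshW : List Letter → List Letter → H
  | [], w => word (FreeMonoid.ofList w)
  | u :: w, [] => word (FreeMonoid.ofList (u :: w))
  | u1 :: w1, u2 :: w2 =>
      word (FreeMonoid.of u1) * nshW w1 (u2 :: w2) +
        word (FreeMonoid.of u2) * nshW (u1 :: w1) w2 -
        δ w1 • word (FreeMonoid.ofList (τ u1 :: u2 :: w2)) -
        δ w2 • word (FreeMonoid.ofList (τ u2 :: u1 :: w1))
termination_by w1 w2 => w1.length + w2.length
decreasing_by all_goals simp [Nat.lt_succ_iff]

/-- The shuffle product `ш` on `H`, extended ℚ-bilinearly. -/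
noncomputable def sh (a b : H) : H :=
  Finsupp.sum a.coeff fun w1 c1 =>
    Finsupp.sum b.coeff fun w2 c2 =>
      (c1 * c2) • shW (FreeMonoid.toList w1) (FreeMonoid.toList w2)

/-- The n-shuffle product `ш̄` on `H`, extended ℚ-bilinearly. -/
noncomputable def nsh (a b : H) : H :=
  Finsupp.sum a.coeff fun w1 c1 =>
    Finsupp.sum b.coeff fun w2 c2 =>
      (c1 * c2) • nshW (FreeMonoid.toList w1) (FreeMonoid.toList w2)

/-- `S₁`: the ℚ-algebra endomorphism of `H` with `S₁(x) = x`, `S₁(y) = x + y`. -/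
noncomputable def S1 : H →ₐ[ℚ] H :=
  MonoidAlgebra.lift ℚ H (FreeMonoid Letter)
    (FreeMonoid.lift fun u => match u with
      | Letter.x => X
      | Letter.y => X + Y)

/-- `S₂`: the ℚ-algebra endomorphism of `H` with `S₂(x) = x`, `S₂(y) = y − x`. -/
noncomputable def S2 : H →ₐ[ℚ] H :=
  MonoidAlgebra.lift ℚ H (FreeMonoid Letter)
    (FreeMonoid.lift fun u => match u with
      | Letter.x => X
      | Letter.y => Y - X)

/-- `S` on a word: `S(1) = 1` and `S(Fy) = S₁(F)y`. -/
noncomputable def SW (w : FreeMonoid Letter) : H :=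
  match (FreeMonoid.toList w).getLast? with
  | some Letter.y =>
      S1 (word (FreeMonoid.ofList (FreeMonoid.toList w).dropLast)) * Y
  | _ => word w

/-- The ℚ-linear map `S : H¹ → H¹` with `S(1) = 1`, `S(Fy) = S₁(F)y`. -/
noncomputable def S (a : H) : H := Finsupp.sum a.coeff fun w c => c • SW w

/-- `S̃` on a word: `S̃(1) = 1` and `S̃(Fy) = S₂(F)y`. -/
noncomputable def StW (w : FreeMonoid Letter) : H :=
  match (FreeMonoid.toList w).getLast? with
  | some Letter.y =>
      S2 (word (FreeMonoid.ofList (FreeMonoid.toList w).dropLast)) * Y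
  | _ => word w

/-- The ℚ-linear map `S̃ : H¹ → H¹` with `S̃(1) = 1`, `S̃(Fy) = S₂(F)y`. -/
noncomputable def St (a : H) : H := Finsupp.sum a.coeff fun w c => c • StW w

/-- The multiple zeta value `ζ(k₁,…,kₙ)`: the sum over strictly decreasing
tuples `m₁ > m₂ > ⋯ > mₙ > 0` of `1/(m₁^{k₁}⋯mₙ^{kₙ})`. -/
noncomputable def mzeta (ks : List ℕ) : ℝ :=
  ∑' m : {f : Fin ks.length → ℕ // (∀ i, 0 < f i) ∧
      ∀ i j : Fin ks.length, i < j → f j < f i},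
    ∏ i : Fin ks.length, ((m.1 i : ℝ) ^ ks.get i)⁻¹

/-- The non-strict multiple zeta value `ζ̄(k₁,…,kₙ)`: the sum over weakly
decreasing tuples `m₁ ≥ m₂ ≥ ⋯ ≥ mₙ > 0` of `1/(m₁^{k₁}⋯mₙ^{kₙ})`. -/
noncomputable def nmzeta (ks : List ℕ) : ℝ :=
  ∑' m : {f : Fin ks.length → ℕ // (∀ i, 0 < f i) ∧
      ∀ i j : Fin ks.length, i ≤ j → f j ≤ f i},
    ∏ i : Fin ks.length, ((m.1 i : ℝ) ^ ks.get i)⁻¹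

/-- The evaluation map `Z : H⁰ → ℝ`, `Z(1) = 1`,
`Z(z_{k₁}⋯z_{kₙ}) = ζ(k₁,…,kₙ)` (extended ℚ-linearly to `H`). -/
noncomputable def Z (a : H) : ℝ := Finsupp.sum a.coeff fun w c => (c : ℝ) * mzeta (toZ w)

/-- The n-evaluation map `Z̄ : H⁰ → ℝ`, `Z̄(1) = 1`,
`Z̄(z_{k₁}⋯z_{kₙ}) = ζ̄(k₁,…,kₙ)` (extended ℚ-linearly to `H`). -/
noncomputable def Zbar (a : H) : ℝ := Finsupp.sum a.coeff fun w c => (c : ℝ) * nmzeta (toZ w)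

/-- `i`-fold n-harmonic power: `a^{*̄ 0} = 1`, `a^{*̄ (i+1)} = a *̄ a^{*̄ i}`. -/
noncomputable def nharmPow : ℕ → H → H
  | 0, _ => 1
  | i + 1, a => nharm a (nharmPow i a)

/-- `i`-fold n-shuffle power: `a^{ш̄ 0} = 1`, `a^{ш̄ (i+1)} = a ш̄ a^{ш̄ i}`. -/
noncomputable def nshPow : ℕ → H → H
  | 0, _ => 1
  | i + 1, a => nsh a (nshPow i a)

end H

open H

namespace NSh

open PowerSeries

/-- Good words: empty or ending in `y`. -/
def Good : List Letter → Prop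
  | [] => True
  | u :: w => Good w ∧ (w = [] → u = Letter.y)

/-- formal integration `∫ f dt/t`. -/
noncomputable def I : ℚ⟦X⟧ →ₗ[ℚ] ℚ⟦X⟧ where
  toFun f := PowerSeries.mk fun m => coeff m f / (m : ℚ)
  map_add' f g := by ext m; simp [add_div]
  map_smul' c f := by ext m; simp [mul_div_assoc]

/-- The geometric series. -/
noncomputable def G : ℚ⟦X⟧ := PowerSeries.mk fun _ => 1

noncomputable def om : Letter → ℚ⟦X⟧
  | Letter.x => 1
  | Letter.y => G

noncomputable def J (u : Letter) : ℚ⟦X⟧ →ₗ[ℚ] ℚ⟦X⟧ := I ∘ₗ LinearMap.mulLeft ℚ (om u)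

/-- The generating series of a word. -/
noncomputable def a : List Letter → ℚ⟦X⟧
  | [] => 1
  | u :: w => J u (a w)

/-- coefficient map -/
noncomputable def cL : H →ₗ[ℚ] (FreeMonoid Letter →₀ ℚ) where
  toFun h := h.coeff
  map_add' _ _ := rfl
  map_smul' _ _ := rfl

lemma cL_apply (h : H) : cL h = h.coeff := rfl

lemma cL_single (w : FreeMonoid Letter) (c : ℚ) :
    cL (MonoidAlgebra.single w c) = Finsupp.single w c := rfl

noncomputable def A : H →ₗ[ℚ] ℚ⟦X⟧ :=
  (Finsupp.linearCombination ℚ (fun w : FreeMonoid Letter => a (FreeMonoid.toList w))) ∘ₗ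
    cL

lemma A_single (w : FreeMonoid Letter) (c : ℚ) :
    A (MonoidAlgebra.single w c) = c • a (FreeMonoid.toList w) := by
  simp [A, cL_single, cL_apply]

lemma A_word (w : FreeMonoid Letter) : A (word w) = a (FreeMonoid.toList w) := by
  simp [word, A_single]

lemma A_letter_mul (u : Letter) (h : H) : A (word (FreeMonoid.of u) * h) = J u (A h) := by
  induction h using MonoidAlgebra.induction_linear with
  | zero => simp
  | add f g hf hg => simp [mul_add, hf, hg]
  | single m r =>
    simp [word, MonoidAlgebra.single_mul_single, A_single, a]

noncomputable def Th (f : ℚ⟦X⟧) : ℚ⟦X⟧ := PowerSeries.X * derivative ℚ f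

lemma coeff_Th (f : ℚ⟦X⟧) (m : ℕ) : coeff m (Th f) = m * coeff m f := by
  cases m with
  | zero => simp [Th]
  | succ m => simp [Th, coeff_succ_X_mul, coeff_derivative, mul_comm]

lemma Th_mul (f g : ℚ⟦X⟧) : Th (f * g) = Th f * g + f * Th g := by
  simp only [Th, Derivation.leibniz, smul_eq_mul]; ring

lemma Th_add (f g : ℚ⟦X⟧) : Th (f + g) = Th f + Th g := by
  simp [Th, mul_add]
lemma Th_sub (f g : ℚ⟦X⟧) : Th (f - g) = Th f - Th g := by
  simp [Th, mul_sub]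
lemma Th_smul (c : ℚ) (f : ℚ⟦X⟧) : Th (c • f) = c • Th f := by
  simp [Th]

lemma Th_inj {f g : ℚ⟦X⟧} (h0 : constantCoeff f = constantCoeff g) (h : Th f = Th g) : f = g := by
  ext m
  rcases Nat.eq_zero_or_pos m with rfl | hm
  · simpa using h0
  · have := congrArg (coeff m) h
    rw [coeff_Th, coeff_Th] at this
    have hm' : (m : ℚ) ≠ 0 := by positivity
    exact mul_left_cancel₀ hm' this

lemma const_om (u : Letter) : constantCoeff (om u) = 1 := by
  cases u
  · simp [om]
  · rw [om, G, ← coeff_zero_eq_constantCoeff_apply, coeff_mk]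

lemma const_J (u : Letter) (f : ℚ⟦X⟧) : constantCoeff (J u f) = 0 := by
  rw [← coeff_zero_eq_constantCoeff_apply]; simp [J, I, -coeff_zero_eq_constantCoeff]

lemma Th_J (u : Letter) (f : ℚ⟦X⟧) : Th (J u f) = om u * f - C (constantCoeff f) := by
  ext m
  rw [coeff_Th]
  rcases Nat.eq_zero_or_pos m with rfl | hm
  · simp [const_om]
  · have hm' : (m : ℚ) ≠ 0 := by positivity
    simp [J, I, coeff_C, hm.ne']
    field_simp

lemma const_a (w : List Letter) : constantCoeff (a w) = δ w := by
  cases w <;> simp [a, δ, const_J]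

lemma delta_om {u : Letter} {w : List Letter} (h : w = [] → u = Letter.y) :
    δ w • om (τ u) = C (δ w) := by
  cases w with
  | nil => simp [h rfl, δ, τ, om]
  | cons => simp [δ]

lemma A_nshW : ∀ w1 w2 : List Letter, Good w1 → Good w2 → A (nshW w1 w2) = a w1 * a w2
  | [], w, _, _ => by rw [nshW, A_word]; simp [a]
  | u :: w, [], _, _ => by rw [nshW, A_word]; simp [a]
  | u1 :: w1, u2 :: w2, h1, h2 => by
    have e1 := A_nshW w1 (u2 :: w2) h1.1 h2
    have e2 := A_nshW (u1 :: w1) w2 h1 h2.1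
    rw [nshW]
    simp only [map_add, map_sub, map_smul, A_letter_mul, e1, e2, A_word, FreeMonoid.toList_ofList]
    have d1 := delta_om h1.2
    have d2 := delta_om h2.2
    simp only [a] at *
    apply Th_inj
    · simp [const_J]
    · simp only [Th_add, Th_sub, Th_smul, Th_mul, Th_J, map_mul, const_J, const_a, map_zero,
        mul_zero, zero_mul, sub_zero, ← smul_mul_assoc, d1, d2]
      ring
termination_by w1 w2 => w1.length + w2.length

/-- span of nonempty good words -/
noncomputable def K : Submodule ℚ H :=
  Submodule.span ℚ {h | ∃ w : List Letter, Good w ∧ w ≠ [] ∧ h = word (FreeMonoid.ofList w)}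

/-- span of admissible words -/
noncomputable def K0 : Submodule ℚ H :=
  Submodule.span ℚ {h | ∃ w : List Letter, Good w ∧ (w = [] ∨ ∃ v, v ≠ [] ∧ w = Letter.x :: v) ∧
    h = word (FreeMonoid.ofList w)}

lemma of_mul_word (u : Letter) (w : List Letter) :
    word (FreeMonoid.of u) * word (FreeMonoid.ofList w) = word (FreeMonoid.ofList (u :: w)) := by
  simp [word, MonoidAlgebra.single_mul_single]

lemma K_letter (u : Letter) {h : H} (hh : h ∈ K) : word (FreeMonoid.of u) * h ∈ K := by
  induction hh using Submodule.span_induction with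
  | mem h hm =>
    obtain ⟨w, hw, hne, rfl⟩ := hm
    rw [of_mul_word]
    exact Submodule.subset_span ⟨u :: w, ⟨hw, fun h => absurd h hne⟩, by simp, rfl⟩
  | zero => simp
  | add f g _ _ hf hg => rw [mul_add]; exact K.add_mem hf hg
  | smul c f _ hf => rw [mul_smul_comm]; exact K.smul_mem _ hf

lemma K_x {h : H} (hh : h ∈ K) : word (FreeMonoid.of Letter.x) * h ∈ K0 := by
  induction hh using Submodule.span_induction with
  | mem h hm =>
    obtain ⟨w, hw, hne, rfl⟩ := hm
    rw [of_mul_word]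
    exact Submodule.subset_span ⟨Letter.x :: w, ⟨hw, fun h => absurd h hne⟩,
      Or.inr ⟨w, hne, rfl⟩, rfl⟩
  | zero => simp
  | add f g _ _ hf hg => rw [mul_add]; exact K0.add_mem hf hg
  | smul c f _ hf => rw [mul_smul_comm]; exact K0.smul_mem _ hf

lemma nshW_mem_K : ∀ w1 w2 : List Letter, Good w1 → Good w2 → (w1 ≠ [] ∨ w2 ≠ []) →
    nshW w1 w2 ∈ K
  | [], w, _, h2, h => by
    rw [nshW]; exact Submodule.subset_span ⟨w, h2, by simpa using h, rfl⟩
  | u :: w, [], h1, _, _ => by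
    rw [nshW]; exact Submodule.subset_span ⟨u :: w, h1, by simp, rfl⟩
  | u1 :: w1, u2 :: w2, h1, h2, _ => by
    have e1 := nshW_mem_K w1 (u2 :: w2) h1.1 h2 (by simp)
    have e2 := nshW_mem_K (u1 :: w1) w2 h1 h2.1 (by simp)
    rw [nshW]
    refine K.sub_mem (K.sub_mem (K.add_mem (K_letter _ e1) (K_letter _ e2)) ?_) ?_
    · exact K.smul_mem _ (Submodule.subset_span ⟨τ u1 :: u2 :: w2, ⟨h2, by simp⟩, by simp, rfl⟩)
    · exact K.smul_mem _ (Submodule.subset_span ⟨τ u2 :: u1 :: w1, ⟨h1, by simp⟩, by simp, rfl⟩)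
termination_by w1 w2 => w1.length + w2.length

def Adm (w : List Letter) : Prop := Good w ∧ (w = [] ∨ ∃ v, v ≠ [] ∧ w = Letter.x :: v)

lemma nshW_mem_K0 (w1 w2 : List Letter) (h1 : Adm w1) (h2 : Adm w2) : nshW w1 w2 ∈ K0 := by
  obtain ⟨g1, rfl | ⟨v1, n1, rfl⟩⟩ := h1
  · rw [nshW]; exact Submodule.subset_span ⟨w2, h2.1, h2.2, rfl⟩
  · obtain ⟨g2, rfl | ⟨v2, n2, rfl⟩⟩ := h2
    · rw [nshW]; exact Submodule.subset_span ⟨_, g1, Or.inr ⟨v1, n1, rfl⟩, rfl⟩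
    · rw [nshW]
      have d1 : δ v1 = 0 := by cases v1 <;> simp_all [δ]
      have d2 : δ v2 = 0 := by cases v2 <;> simp_all [δ]
      simp only [d1, d2, zero_smul, sub_zero]
      exact K0.add_mem (K_x (nshW_mem_K _ _ g1.1 g2 (by simp)))
        (K_x (nshW_mem_K _ _ g1 g2.1 (by simp)))

lemma good_append_y (w : List Letter) : Good (w ++ [Letter.y]) := by
  induction w with
  | nil => simp [Good]
  | cons u w ih => exact ⟨ih, by simp⟩

lemma H0_le : H0 ≤ K0 := by
  rw [H0]
  refine sup_le ?_ ?_
  · rintro _ ⟨h, rfl⟩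
    induction h using MonoidAlgebra.induction_linear with
    | zero => simp
    | add f g hf hg => rw [map_add]; exact K0.add_mem hf hg
    | single m r =>
      have : ((LinearMap.mulRight ℚ Y).comp (LinearMap.mulLeft ℚ H.X)) (MonoidAlgebra.single m r)
          = r • word (FreeMonoid.ofList (Letter.x :: (FreeMonoid.toList m ++ [Letter.y]))) := by
        simp [H.X, Y, word, MonoidAlgebra.single_mul_single, mul_assoc]
      rw [this]
      exact K0.smul_mem _ (Submodule.subset_span ⟨Letter.x :: (FreeMonoid.toList m ++ [Letter.y]),
        ⟨good_append_y _, by simp⟩,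
        Or.inr ⟨_, by simp, rfl⟩, rfl⟩)
  · rw [Submodule.span_le]
    rintro _ rfl
    exact Submodule.subset_span ⟨[], trivial, Or.inl rfl, rfl⟩

noncomputable def ZL : H →ₗ[ℚ] ℝ :=
  (Finsupp.linearCombination ℚ (fun w : FreeMonoid Letter => nmzeta (toZ w))) ∘ₗ
    cL

lemma ZL_eq (h : H) : Zbar h = ZL h := by
  simp [ZL, Zbar, Finsupp.linearCombination_apply, Rat.smul_def,
    cL_single, cL_apply]

noncomputable def nshL : H →ₗ[ℚ] H →ₗ[ℚ] H :=
  (Finsupp.linearCombination ℚ (fun w1 : FreeMonoid Letter =>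
    (Finsupp.linearCombination ℚ (fun w2 : FreeMonoid Letter =>
      nshW (FreeMonoid.toList w1) (FreeMonoid.toList w2))) ∘ₗ
    cL)) ∘ₗ
    cL

lemma nshL_eq (f g : H) : nsh f g = nshL f g := by
  simp [nshL, nsh, Finsupp.linearCombination_apply, Finsupp.sum, LinearMap.sum_apply,
    cL_single, cL_apply,
    Finset.smul_sum, mul_smul]

lemma nshL_word (w1 w2 : List Letter) :
    nshL (word (FreeMonoid.ofList w1)) (word (FreeMonoid.ofList w2)) = nshW w1 w2 := by
  simp [nshL, word,
    cL_single, cL_apply]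

lemma ZL_word (w : List Letter) : ZL (word (FreeMonoid.ofList w)) = nmzeta (toZAux w 0) := by
  simp [ZL, word, H.toZ,
    cL_single, cL_apply]

open Classical in
noncomputable def T (ks : List ℕ) (s : Set ℕ) : ENNReal :=
  ∑' f : Fin ks.length → ℕ,
    if (∀ i, 0 < f i) ∧ (∀ i j : Fin ks.length, i ≤ j → f j ≤ f i) ∧ ∀ i, f i ∈ s then
      ENNReal.ofReal (∏ i : Fin ks.length, ((f i : ℝ) ^ ks.get i)⁻¹) else 0

lemma nmzeta_eq (ks : List ℕ) : nmzeta ks = (T ks Set.univ).toReal := by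
  classical
  rw [T, ENNReal.tsum_toReal_eq (by intro f; split_ifs <;> simp)]
  rw [nmzeta]
  refine (tsum_subtype {f : Fin ks.length → ℕ | (∀ i, 0 < f i) ∧
      ∀ i j : Fin ks.length, i ≤ j → f j ≤ f i}
      (fun f => ∏ i : Fin ks.length, ((f i : ℝ) ^ ks.get i)⁻¹)).trans ?_
  refine tsum_congr fun f => ?_
  have hp : 0 ≤ ∏ i : Fin ks.length, ((f i : ℝ) ^ ks.get i)⁻¹ :=
    Finset.prod_nonneg fun i _ => by positivity
  simp only [Set.indicator_apply, Set.mem_ofPred_eq, Set.mem_univ, implies_true, and_true]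
  split_ifs
  · rw [ENNReal.toReal_ofReal hp]
  · rfl

lemma T_nil (s : Set ℕ) : T [] s = 1 := by
  classical
  simp [T]

open Classical in
lemma T_cons (k : ℕ) (ks : List ℕ) (s : Set ℕ) (hs : IsLowerSet s) :
    T (k :: ks) s = ∑' m : ℕ, if 0 < m ∧ m ∈ s then
      ENNReal.ofReal (((m : ℝ) ^ k)⁻¹) * T ks (Set.Iic m) else 0 := by
  rw [T]
  refine ((Fin.consEquiv (n := ks.length) (fun _ => ℕ)).tsum_eq _).symm.trans ?_
  rw [ENNReal.tsum_prod']
  refine tsum_congr fun m => ?_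
  split_ifs with h
  · rw [T, ← ENNReal.tsum_mul_left]
    refine tsum_congr fun g => ?_
    have key : ((∀ i, 0 < (Fin.consEquiv (n := ks.length) (fun _ => ℕ)) (m, g) i) ∧
        (∀ i j : Fin (ks.length + 1), i ≤ j → (Fin.consEquiv (n := ks.length) (fun _ => ℕ)) (m, g) j
          ≤ (Fin.consEquiv (n := ks.length) (fun _ => ℕ)) (m, g) i) ∧
        ∀ i, (Fin.consEquiv (n := ks.length) (fun _ => ℕ)) (m, g) i ∈ s) ↔
        ((∀ i, 0 < g i) ∧ (∀ i j : Fin ks.length, i ≤ j → g j ≤ g i) ∧ ∀ i, g i ∈ Set.Iic m) := by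
      simp only [Fin.consEquiv, Equiv.coe_fn_mk, Set.mem_Iic]
      constructor
      · rintro ⟨h1, h2, h3⟩
        refine ⟨fun i => by simpa using h1 i.succ, fun i j hij => ?_, fun i => ?_⟩
        · simpa using h2 i.succ j.succ (by simpa using hij)
        · simpa using h2 0 i.succ (Fin.zero_le _)
      · rintro ⟨h1, h2, h3⟩
        refine ⟨fun i => ?_, fun i j hij => ?_, fun i => ?_⟩
        · refine Fin.cases ?_ (fun i => ?_) i
          · simpa using h.1
          · simpa using h1 i
        · revert hij
          refine Fin.cases ?_ (fun j => ?_) j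
          · intro hij
            have : i = 0 := Fin.le_zero_iff.mp hij
            rw [this]
          · refine Fin.cases ?_ (fun i => ?_) i
            · intro _; simpa using h3 j
            · intro hij; simpa using h2 i j (by simpa using hij)
        · refine Fin.cases ?_ (fun i => ?_) i
          · simpa using h.2
          · simpa using hs (h3 i) h.2
    by_cases hq : (∀ i, 0 < g i) ∧ (∀ i j : Fin ks.length, i ≤ j → g j ≤ g i) ∧
        ∀ i, g i ∈ Set.Iic m
    · rw [if_pos hq]
      refine (if_pos (key.mpr hq)).trans ?_
      rw [← ENNReal.ofReal_mul (by positivity)]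
      congr 1
      exact Fin.prod_univ_succ _
    · rw [if_neg hq, mul_zero]
      exact if_neg (fun h' => hq (key.mp h'))
  · rw [ENNReal.tsum_eq_zero]
    intro g
    rw [if_neg]
    rintro ⟨h1, _, h3⟩
    exact h ⟨by simpa [Fin.consEquiv] using h1 (0 : Fin (ks.length + 1)),
      by simpa [Fin.consEquiv] using h3 (0 : Fin (ks.length + 1))⟩

noncomputable def b (w : List Letter) (m : ℕ) : ℝ := ((coeff m (a w) : ℚ) : ℝ)

lemma b_nil (m : ℕ) : b [] m = if m = 0 then 1 else 0 := by
  simp only [b, a, coeff_one]; split_ifs <;> simp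

lemma b_x (w : List Letter) (m : ℕ) : b (Letter.x :: w) m = b w m / m := by
  simp [b, a, J, I, om]

lemma b_y (w : List Letter) (m : ℕ) :
    b (Letter.y :: w) m = (∑ j ∈ Finset.range (m + 1), b w j) / m := by
  have : coeff m (G * a w) = ∑ j ∈ Finset.range (m + 1), coeff j (a w) := by
    rw [mul_comm, coeff_mul, Finset.Nat.sum_antidiagonal_eq_sum_range_succ_mk]
    simp [G]
  simp [b, a, J, I, om, this]

lemma b_nonneg (w : List Letter) (m : ℕ) : 0 ≤ b w m := by
  induction w generalizing m with
  | nil => rw [b_nil]; split_ifs <;> simp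
  | cons u w ih =>
    cases u
    · rw [b_x]; exact div_nonneg (ih m) (by positivity)
    · rw [b_y]; exact div_nonneg (Finset.sum_nonneg fun j _ => ih j) (by positivity)

lemma b_zero (w : List Letter) (hw : w ≠ []) : b w 0 = 0 := by
  cases w with
  | nil => exact absurd rfl hw
  | cons u w => cases u <;> simp [b_x, b_y]

lemma sum_b_nil (m : ℕ) : ∑ j ∈ Finset.range (m + 1), b [] j = 1 := by
  simp [b_nil]

lemma sum_inv_sqrt (m : ℕ) : ∑ j ∈ Finset.range (m + 1), 1 / √(j : ℝ) ≤ 2 * √(m : ℝ) := by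
  induction m with
  | zero => simp
  | succ m ih =>
    rw [Finset.sum_range_succ]
    have h1 : √((m : ℝ)) ^ 2 = m := Real.sq_sqrt (by positivity)
    have h2 : √((m + 1 : ℕ) : ℝ) ^ 2 = m + 1 := by
      rw [Real.sq_sqrt (by positivity)]; push_cast; ring
    have h3 : 0 < √((m + 1 : ℕ) : ℝ) := Real.sqrt_pos.mpr (by positivity)
    have h4 : 0 ≤ √(m : ℝ) := Real.sqrt_nonneg _
    have : 1 / √((m + 1 : ℕ) : ℝ) ≤ 2 * √((m + 1 : ℕ) : ℝ) - 2 * √(m : ℝ) := by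
      rw [div_le_iff₀ h3]
      nlinarith [sq_nonneg (√((m + 1 : ℕ) : ℝ) - √(m : ℝ))]
    linarith

lemma b_bound (w : List Letter) (hg : Good w) (hw : w ≠ []) :
    ∃ C : ℝ, 0 ≤ C ∧ ∀ m : ℕ, b w m ≤ C * (1 / √(m : ℝ)) := by
  induction w with
  | nil => exact absurd rfl hw
  | cons u w ih =>
    by_cases h : w = []
    · subst h
      have : u = Letter.y := hg.2 rfl
      subst this
      refine ⟨1, by norm_num, fun m => ?_⟩
      rw [b_y, sum_b_nil, one_mul]
      rcases Nat.eq_zero_or_pos m with rfl | hm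
      · simp
      · have h1 : (1 : ℝ) ≤ m := by exact_mod_cast hm
        apply one_div_le_one_div_of_le (Real.sqrt_pos.mpr (by linarith))
        rw [Real.sqrt_le_left (by linarith)]
        nlinarith
    · obtain ⟨C, hC, hb⟩ := ih hg.1 h
      cases u
      · refine ⟨C, hC, fun m => ?_⟩
        rw [b_x]
        rcases Nat.eq_zero_or_pos m with rfl | hm
        · simp
        · have h1 : (1 : ℝ) ≤ m := by exact_mod_cast hm
          exact (div_le_self (b_nonneg _ _) h1).trans (hb m)
      · refine ⟨C * 2, by positivity, fun m => ?_⟩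
        rw [b_y]
        rcases Nat.eq_zero_or_pos m with rfl | hm
        · simp
        · have h1 : (0 : ℝ) < m := by exact_mod_cast hm
          have h2 : ∑ j ∈ Finset.range (m + 1), b w j ≤ C * (2 * √(m : ℝ)) := by
            refine (Finset.sum_le_sum fun j _ => hb j).trans ?_
            rw [← Finset.mul_sum]
            exact mul_le_mul_of_nonneg_left (sum_inv_sqrt m) hC
          have h3 : 0 < √(m : ℝ) := Real.sqrt_pos.mpr h1
          have h4 : √((m : ℝ)) * √((m : ℝ)) = m := Real.mul_self_sqrt h1.le
          calc _ ≤ C * (2 * √(m : ℝ)) / m := by gcongr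
            _ = C * 2 * (1 / √(m : ℝ)) := by
              field_simp; rw [sq, h4]
  
lemma b_summable (w : List Letter) (hw : Adm w) : Summable (b w) := by
  obtain ⟨hg, rfl | ⟨v, hv, rfl⟩⟩ := hw
  · apply summable_of_ne_finset_zero (s := {0})
    intro m hm
    rw [b_nil, if_neg (by simpa using hm)]
  · obtain ⟨C, hC, hb⟩ := b_bound v hg.1 hv
    have hs : Summable fun m : ℕ => C * (1 / (m : ℝ) ^ (3 / 2 : ℝ)) :=
      (Real.summable_one_div_nat_rpow.mpr (by norm_num)).mul_left C
    refine hs.of_nonneg_of_le (b_nonneg _) fun m => ?_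
    rw [b_x]
    rcases Nat.eq_zero_or_pos m with rfl | hm
    · simp
    · have h1 : (0 : ℝ) < m := by exact_mod_cast hm
      have h3 : (m : ℝ) ^ (3 / 2 : ℝ) = √(m : ℝ) * m := by
        rw [Real.sqrt_eq_rpow, show (3 / 2 : ℝ) = 1 / 2 + 1 by norm_num, Real.rpow_add h1,
          Real.rpow_one]
      calc b v m / m ≤ C * (1 / √(m : ℝ)) / m := by gcongr; exact hb m
        _ = _ := by rw [h3]; field_simp

lemma toZ_spec (w : List Letter) (hg : Good w) (hw : w ≠ []) (n : ℕ) :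
    ∃ k ks, toZAux w n = k :: ks ∧ ∀ m : ℕ, 0 < m →
      ENNReal.ofReal (((m : ℝ) ^ k)⁻¹) * T ks (Set.Iic m) =
        ENNReal.ofReal (((m : ℝ) ^ n)⁻¹ * b w m) := by
  induction w generalizing n with
  | nil => exact absurd rfl hw
  | cons u w ih =>
    cases u
    · have h : w ≠ [] := fun h => by simpa using hg.2 h
      obtain ⟨k, ks, h1, h2⟩ := ih hg.1 h (n + 1)
      refine ⟨k, ks, h1, fun m hm => ?_⟩
      rw [h2 m hm, b_x]
      congr 1
      field_simp
      ring
    · refine ⟨n + 1, toZAux w 0, rfl, fun m hm => ?_⟩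
      have h1 : T (toZAux w 0) (Set.Iic m) =
          ENNReal.ofReal (∑ j ∈ Finset.range (m + 1), b w j) := by
        by_cases h : w = []
        · subst h
          rw [sum_b_nil]; simp [toZAux, T_nil]
        · obtain ⟨k, ks, h1, h2⟩ := ih hg.1 h 0
          rw [h1, T_cons _ _ _ (isLowerSet_Iic m),
            ENNReal.ofReal_sum_of_nonneg (fun j _ => b_nonneg w j),
            tsum_eq_sum (s := Finset.range (m + 1))]
          · refine Finset.sum_congr rfl fun j hj => ?_
            have hj' : j ≤ m := by simpa [Nat.lt_succ_iff] using hj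
            rcases Nat.eq_zero_or_pos j with rfl | hj0
            · simp [b_zero w h]
            · rw [if_pos ⟨hj0, hj'⟩, h2 j hj0]; simp
          · intro j hj
            rw [if_neg]
            rintro ⟨_, h'⟩
            exact hj (by simpa [Nat.lt_succ_iff] using h')
      rw [h1, b_y, ← ENNReal.ofReal_mul (by positivity)]
      congr 1
      field_simp
      ring

lemma nmzeta_word (w : List Letter) (hg : Good w) :
    nmzeta (toZAux w 0) = ∑' m, b w m := by
  rw [nmzeta_eq]
  by_cases h : w = []
  · subst h
    simp [toZAux, T_nil, b_nil]
  · obtain ⟨k, ks, h1, h2⟩ := toZ_spec w hg h 0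
    rw [h1, T_cons _ _ _ isLowerSet_univ]
    have : (∑' m, b w m) = ∑' m, (ENNReal.ofReal (b w m)).toReal :=
      tsum_congr fun m => (ENNReal.toReal_ofReal (b_nonneg w m)).symm
    rw [this, ← ENNReal.tsum_toReal_eq (by simp)]
    congr 1
    refine tsum_congr fun m => ?_
    rcases Nat.eq_zero_or_pos m with rfl | hm
    · simp [b_zero w h]
    · rw [if_pos ⟨hm, trivial⟩, h2 m hm]; simp

noncomputable def cf (m : ℕ) (h : H) : ℝ := ((coeff m (A h) : ℚ) : ℝ)

lemma hasSum_word (w : List Letter) (hw : Adm w) :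
    HasSum (fun m => cf m (word (FreeMonoid.ofList w))) (ZL (word (FreeMonoid.ofList w))) := by
  rw [ZL_word, nmzeta_word w hw.1]
  simp only [cf, A_word, FreeMonoid.toList_ofList]
  exact (b_summable w hw).hasSum

lemma hasSum_K0 (h : H) (hh : h ∈ K0) : HasSum (fun m => cf m h) (ZL h) := by
  induction hh using Submodule.span_induction with
  | mem h hm =>
    obtain ⟨w, hw, hne, rfl⟩ := hm
    exact hasSum_word w ⟨hw, hne⟩
  | zero => simp [cf]
  | add f g _ _ hf hg => simpa [cf] using hf.add hg
  | smul c f _ hf => simpa [cf, Rat.smul_def] using hf.mul_left (c : ℝ)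

lemma ZL_nshW (w1 w2 : List Letter) (h1 : Adm w1) (h2 : Adm w2) :
    ZL (nshW w1 w2) = ZL (word (FreeMonoid.ofList w1)) * ZL (word (FreeMonoid.ofList w2)) := by
  rw [ZL_word, ZL_word, nmzeta_word w1 h1.1, nmzeta_word w2 h2.1,
    tsum_mul_tsum_eq_tsum_sum_antidiagonal_of_summable_norm (b_summable w1 h1).norm
      (b_summable w2 h2).norm,
    ← (hasSum_K0 _ (nshW_mem_K0 w1 w2 h1 h2)).tsum_eq]
  refine tsum_congr fun m => ?_
  rw [cf, A_nshW w1 w2 h1.1 h2.1, coeff_mul]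
  push_cast
  rfl

lemma ZL_nshL (f g : H) (hf : f ∈ K0) (hg : g ∈ K0) : ZL (nshL f g) = ZL f * ZL g := by
  induction hf using Submodule.span_induction with
  | mem f hm =>
    obtain ⟨w1, a1, c1, rfl⟩ := hm
    induction hg using Submodule.span_induction with
    | mem g hm =>
      obtain ⟨w2, a2, c2, rfl⟩ := hm
      rw [nshL_word]
      exact ZL_nshW w1 w2 ⟨a1, c1⟩ ⟨a2, c2⟩
    | zero => simp
    | add f g _ _ hf hg => simp only [map_add, hf, hg, mul_add]
    | smul c f _ hf => simp only [map_smul, hf, mul_smul_comm]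
  | zero => simp
  | add f g _ _ hf hg => simp only [map_add, LinearMap.add_apply, hf, hg, add_mul]
  | smul c f _ hf => simp only [map_smul, LinearMap.smul_apply, hf, smul_mul_assoc]

end NSh

/-- The n-evaluation map `Z̄` is multiplicative with respect to the
n-shuffle product: `Z̄(w₁ ш̄ w₂) = Z̄(w₁) Z̄(w₂)` for `w₁, w₂ ∈ H⁰`. -/
theorem Zbar_nsh_mul :
    ∀ w1 ∈ H0, ∀ w2 ∈ H0, Zbar (nsh w1 w2) = Zbar w1 * Zbar w2 := by
  intro w1 h1 w2 h2
  rw [NSh.nshL_eq, NSh.ZL_eq, NSh.ZL_eq, NSh.ZL_eq]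
  exact NSh.ZL_nshL w1 w2 (NSh.H0_le h1) (NSh.H0_le h2)
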